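/- If H is a 3-uniform hypergraph that is 2-regular (every vertex has degree exactly 2), then τ_g(H) ≤ (3/4) m(H). -/

import Mathlib

variable {V : Type} [Fintype V] [DecidableEq V]

/-- The set of legal moves in the transversal game with uncovered edge set `E`:
the vertices hitting at least one uncovered edge. -/
def playable (E : Finset (Finset V)) : Finset V :=
  Finset.univ.filter (fun v => ∃ e ∈ E, v ∈ e)

/-- The number of moves remaining in the transversal game with uncovered edge set `E`
under optimal play, where `ehTurn = true` iff Edge-hitter (the minimizer) moves next;
Staller (the maximizer) moves next iff `ehTurn = false`.  Each move must hit at least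
one uncovered edge, and the game ends when no uncovered edge remains. -/
def gameVal (ehTurn : Bool) (E : Finset (Finset V)) : ℕ :=
  if h : (playable E).Nonempty then
    1 +
      (if ehTurn then
        (playable E).attach.inf' (Finset.attach_nonempty_iff.mpr h)
          (fun v => gameVal (!ehTurn) (E.filter (fun e => v.1 ∉ e)))
      else
        (playable E).attach.sup' (Finset.attach_nonempty_iff.mpr h)
          (fun v => gameVal (!ehTurn) (E.filter (fun e => v.1 ∉ e))))
  else 0
termination_by E.card
decreasing_by
  all_goals
    obtain ⟨v, hv⟩ := v
    simp only [playable, Finset.mem_filter, Finset.mem_univ, true_and] at hv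
    obtain ⟨e, he, hve⟩ := hv
    exact Finset.card_lt_card (Finset.filter_ssubset.mpr ⟨e, he, by simp [hve]⟩)

/-- The game transversal number `τ_g`: Edge-hitter makes the first move. -/
def gameTransversalNum (E : Finset (Finset V)) : ℕ := gameVal true E

/-- The Staller-start game transversal number `τ_g'`: Staller makes the first move. -/
def stallerGameTransversalNum (E : Finset (Finset V)) : ℕ := gameVal false E

/-- The transversal number `τ`: the minimum size of a set of vertices meeting all edges. -/
noncomputable def transversalNum (E : Finset (Finset V)) : ℕ :=
  sInf {n | ∃ T : Finset V, (∀ e ∈ E, ∃ v ∈ T, v ∈ e) ∧ T.card = n}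

/-!
Call a vertex *shared* if it lies in at least two edges that are not yet hit, and let
`Φ = 6 m - n₂`, where `m` counts these edges and `n₂` the shared vertices. If every edge has at
most three vertices, then `6 τ_g ≤ Φ`, because two consecutive moves lower `Φ` by at least `12`, up
to a unit lost to rounding. Indeed, hitting `d` edges lowers `6 m` by `6 d`, and at most `2 d + 1`
vertices stop being shared, or at most `2` if `d = 1`; so every move lowers `Φ` by at least `4`. As
long as there are shared vertices, Edge-hitter can lower `Φ` by `8`, except when each of them has
degree two and each edge meeting the set of shared vertices is a triple contained in it. In that
case the two moves lower `Φ` by at least `7 + 4`, so that `6 τ_g ≤ Φ + 1`; double counting gives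
`3 ∣ Φ`, and rounding removes the `1`. Without shared vertices, `τ_g ≤ m = Φ / 6`.

In a 3-uniform 2-regular hypergraph all vertices are shared and `2 n₂ = 3 m`, so `Φ = 9 m / 2`.
-/

namespace TransversalGame

open Finset

section Hypergraph

variable {α : Type*} [DecidableEq α] {E : Finset (Finset α)} {v : α} {e : Finset α}

/-- The number of edges of `E` containing `v`. -/
def degree (E : Finset (Finset α)) (v : α) : ℕ := #{e ∈ E | v ∈ e}

/-- The edges of `E` that remain uncovered after the vertex `v` has been chosen. -/
def residual (E : Finset (Finset α)) (v : α) : Finset (Finset α) := {e ∈ E | v ∉ e}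

/-- The closed neighborhood of `v`: the union of the edges of `E` containing `v`. It is empty if
there are no such edges. -/
def neighborhood (E : Finset (Finset α)) (v : α) : Finset α := {e ∈ E | v ∈ e}.biUnion id

theorem degree_pos_iff : 0 < degree E v ↔ ∃ e ∈ E, v ∈ e := by
  simp only [degree, card_pos, filter_nonempty_iff]

theorem residual_subset : residual E v ⊆ E := filter_subset _ _

theorem degree_mono {E' : Finset (Finset α)} (h : E' ⊆ E) : degree E' v ≤ degree E v :=
  card_le_card (filter_subset_filter _ h)

theorem card_residual_add_degree (E : Finset (Finset α)) (v : α) :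
    #(residual E v) + degree E v = #E := by
  rw [add_comm]
  exact card_filter_add_card_filter_not (fun e ↦ v ∈ e)

theorem residual_ssubset (hv : 0 < degree E v) : residual E v ⊂ E := by
  have hcard := card_residual_add_degree E v
  exact residual_subset.ssubset_of_ne fun h ↦ by rw [h] at hcard; omega

theorem mem_neighborhood {u : α} : u ∈ neighborhood E v ↔ ∃ e ∈ E, v ∈ e ∧ u ∈ e := by
  simp only [neighborhood, mem_biUnion, mem_filter, id, and_assoc]

theorem degree_residual_of_notMem_neighborhood {u : α} (hu : u ∉ neighborhood E v) :
    degree (residual E v) u = degree E u := by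
  rw [degree, degree, residual, filter_filter]
  congr 1
  refine filter_congr fun e he ↦ and_iff_right_of_imp fun hue hve ↦ ?_
  exact hu (mem_neighborhood.2 ⟨e, he, hve, hue⟩)

theorem card_neighborhood_add_le {k : ℕ} (hE : ∀ e ∈ E, #e ≤ k + 1) (he : e ∈ E) (hv : v ∈ e) :
    #(neighborhood E v) + k ≤ #e + k * degree E v := by
  set others := {f ∈ E | v ∈ f}.erase e
  have hdegree : #others + 1 = degree E v := card_erase_add_one (mem_filter.2 ⟨he, hv⟩)
  have hcover : neighborhood E v ⊆ e ∪ others.biUnion (fun f ↦ f.erase v) := by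
    intro u hu
    obtain ⟨f, hf, hvf, huf⟩ := mem_neighborhood.1 hu
    by_cases hue : u ∈ e
    · exact mem_union_left _ hue
    · refine mem_union_right _ (mem_biUnion.2 ⟨f, ?_, mem_erase.2 ⟨?_, huf⟩⟩)
      · exact mem_erase.2 ⟨fun h ↦ hue (h ▸ huf), mem_filter.2 ⟨hf, hvf⟩⟩
      · exact fun h ↦ hue (h ▸ hv)
  have herase : ∀ f ∈ others, #(f.erase v) ≤ k := by
    intro f hf
    obtain ⟨hfE, hvf⟩ := mem_filter.1 (mem_of_mem_erase hf)
    rw [card_erase_of_mem hvf]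
    exact Nat.sub_le_of_le_add (hE f hfE)
  calc #(neighborhood E v) + k
      ≤ #e + #(others.biUnion (fun f ↦ f.erase v)) + k := by
        gcongr
        exact (card_le_card hcover).trans (card_union_le _ _)
    _ ≤ #e + #others * k + k := by
        gcongr
        exact card_biUnion_le_card_mul _ _ _ herase
    _ = #e + k * degree E v := by rw [← hdegree]; ring

end Hypergraph

section Potential

variable {α : Type*} [Fintype α] [DecidableEq α] {E : Finset (Finset α)} {v : α} {e : Finset α}

/-- The vertices contained in at least two edges of `E`. -/
def sharedVertices (E : Finset (Finset α)) : Finset α := {v | 2 ≤ degree E v}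

/-- The shared vertices of `E` that are no longer shared after `v` has been chosen. -/
def lostVertices (E : Finset (Finset α)) (v : α) : Finset α :=
  sharedVertices E \ sharedVertices (residual E v)

/-- The potential `Φ = 6 m - n₂` of the uncovered edge set `E`, which bounds six times the number of
remaining moves if Edge-hitter is next. It is integer-valued to avoid truncated subtraction. -/
def potential (E : Finset (Finset α)) : ℤ := 6 * #E - #(sharedVertices E)

theorem mem_sharedVertices : v ∈ sharedVertices E ↔ 2 ≤ degree E v := by
  simp only [sharedVertices, mem_filter_univ]

theorem sharedVertices_residual_subset : sharedVertices (residual E v) ⊆ sharedVertices E :=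
  fun _ hu ↦ mem_sharedVertices.2 <|
    (mem_sharedVertices.1 hu).trans (degree_mono residual_subset)

theorem lostVertices_subset_neighborhood : lostVertices E v ⊆ neighborhood E v := by
  intro u hu
  obtain ⟨hshared, hlost⟩ := mem_sdiff.1 hu
  by_contra hfar
  rw [mem_sharedVertices] at hshared hlost
  exact hlost ((degree_residual_of_notMem_neighborhood hfar).symm ▸ hshared)

theorem potential_residual_add (E : Finset (Finset α)) (v : α) :
    potential (residual E v) + 6 * degree E v = potential E + #(lostVertices E v) := by
  have hedges := card_residual_add_degree E v
  have hshared : #(lostVertices E v) + #(sharedVertices (residual E v)) = #(sharedVertices E) :=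
    card_sdiff_add_card_eq_card sharedVertices_residual_subset
  unfold potential
  omega

theorem card_lostVertices_le (h3 : ∀ e ∈ E, #e ≤ 3) (hv : 0 < degree E v) :
    #(lostVertices E v) ≤ 2 * degree E v + 1 := by
  obtain ⟨e, he, hve⟩ := degree_pos_iff.1 hv
  have hlost := card_le_card (lostVertices_subset_neighborhood (E := E) (v := v))
  have hneighborhood := card_neighborhood_add_le h3 he hve
  have hcard := h3 e he
  omega

theorem card_lostVertices_le_two (h3 : ∀ e ∈ E, #e ≤ 3) (hv : degree E v = 1) :
    #(lostVertices E v) ≤ 2 := by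
  obtain ⟨e, he, hve⟩ := degree_pos_iff.1 (hv ▸ Nat.one_pos)
  have hlost : lostVertices E v ⊂ neighborhood E v := by
    refine (ssubset_iff_of_subset lostVertices_subset_neighborhood).2
      ⟨v, mem_neighborhood.2 ⟨e, he, hve, hve⟩, fun hmem ↦ ?_⟩
    have := mem_sharedVertices.1 (mem_sdiff.1 hmem).1
    omega
  have hlt := card_lt_card hlost
  have hneighborhood := card_neighborhood_add_le h3 he hve
  have hcard := h3 e he
  omega

theorem potential_residual_add_four_le (h3 : ∀ e ∈ E, #e ≤ 3) (hv : 0 < degree E v) :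
    potential (residual E v) + 4 ≤ potential E := by
  have hchange := potential_residual_add E v
  obtain hone | hmany : degree E v = 1 ∨ 2 ≤ degree E v := by omega
  · have hlost := card_lostVertices_le_two h3 hone
    omega
  · have hlost := card_lostVertices_le h3 hv
    omega

theorem potential_residual_add_seven_le (h3 : ∀ e ∈ E, #e ≤ 3) (hv : v ∈ sharedVertices E) :
    potential (residual E v) + 7 ≤ potential E := by
  have hdegree := mem_sharedVertices.1 hv
  have hchange := potential_residual_add E v
  have hlost := card_lostVertices_le h3 (zero_lt_two.trans_le hdegree)
  omega

theorem degree_eq_two_of_potential_lt (h3 : ∀ e ∈ E, #e ≤ 3) (hv : v ∈ sharedVertices E)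
    (hlt : potential E < potential (residual E v) + 8) : degree E v = 2 := by
  have hdegree := mem_sharedVertices.1 hv
  have hchange := potential_residual_add E v
  have hlost := card_lostVertices_le h3 (zero_lt_two.trans_le hdegree)
  omega

theorem card_eq_three_and_subset_of_potential_lt (h3 : ∀ e ∈ E, #e ≤ 3)
    (hv : v ∈ sharedVertices E) (hlt : potential E < potential (residual E v) + 8)
    (he : e ∈ E) (hve : v ∈ e) : #e = 3 ∧ e ⊆ sharedVertices E := by
  have hdegree := degree_eq_two_of_potential_lt h3 hv hlt
  have hlost : 5 ≤ #(lostVertices E v) := by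
    have := potential_residual_add E v
    omega
  have hsubset := lostVertices_subset_neighborhood (E := E) (v := v)
  have hle := card_le_card hsubset
  have hneighborhood := card_neighborhood_add_le h3 he hve
  have hcard := h3 e he
  have heq : lostVertices E v = neighborhood E v := eq_of_subset_of_card_le hsubset (by omega)
  refine ⟨by omega, fun u hu ↦ ?_⟩
  have hu' : u ∈ lostVertices E v := heq ▸ mem_neighborhood.2 ⟨e, he, hve, hu⟩
  exact (mem_sdiff.1 hu').1

theorem dvd_two_mul_card_sharedVertices {k : ℕ} (hdegree : ∀ v ∈ sharedVertices E, degree E v = 2)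
    (hE : ∀ v ∈ sharedVertices E, ∀ e ∈ E, v ∈ e → #e = k ∧ e ⊆ sharedVertices E) :
    k ∣ 2 * #(sharedVertices E) := by
  have hcount : ∑ e ∈ E, #(sharedVertices E ∩ e) = #(sharedVertices E) * 2 := sum_card_inter hdegree
  rw [mul_comm, ← hcount]
  refine dvd_sum fun e he ↦ ?_
  obtain hempty | ⟨v, hv⟩ := (sharedVertices E ∩ e).eq_empty_or_nonempty
  · simp only [hempty, card_empty, dvd_zero]
  · rw [mem_inter] at hv
    obtain ⟨hcard, hsubset⟩ := hE v hv.1 e he hv.2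
    rw [inter_eq_right.2 hsubset, hcard]

theorem exists_potential_residual_add_le (h3 : ∀ e ∈ E, #e ≤ 3)
    (hne : (sharedVertices E).Nonempty) :
    ∃ v ∈ sharedVertices E, potential (residual E v) + 8 ≤ potential E ∨
      potential (residual E v) + 7 ≤ potential E ∧ 3 ∣ potential E := by
  by_cases hgood : ∃ v ∈ sharedVertices E, potential (residual E v) + 8 ≤ potential E
  · obtain ⟨v, hv, hdrop⟩ := hgood
    exact ⟨v, hv, Or.inl hdrop⟩
  · push Not at hgood
    obtain ⟨v, hv⟩ := hne
    have hdvd : 3 ∣ 2 * #(sharedVertices E) := dvd_two_mul_card_sharedVertices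
      (fun u hu ↦ degree_eq_two_of_potential_lt h3 hu (hgood u hu))
      (fun u hu e ↦ card_eq_three_and_subset_of_potential_lt h3 hu (hgood u hu))
    refine ⟨v, hv, Or.inr ⟨potential_residual_add_seven_le h3 hv, ?_⟩⟩
    unfold potential
    omega

theorem two_mul_card_sharedVertices_of_regular {k : ℕ} (hk : ∀ e ∈ E, #e = k)
    (hreg : ∀ v, degree E v = 2) : 2 * #(sharedVertices E) = k * #E := by
  have hall : sharedVertices E = univ :=
    eq_univ_of_forall fun v ↦ mem_sharedVertices.2 (hreg v).ge
  calc 2 * #(sharedVertices E) = Fintype.card α * 2 := by rw [hall, card_univ, mul_comm]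
    _ = ∑ e ∈ E, #e := (sum_card hreg).symm
    _ = k * #E := by rw [sum_const_nat hk, mul_comm]

end Potential

section Game

variable {E : Finset (Finset V)} {v : V}

theorem mem_playable_iff_degree_pos : v ∈ playable E ↔ 0 < degree E v := by
  simp only [playable, mem_filter_univ, degree_pos_iff]

theorem gameVal_eq_zero (b : Bool) (h : ¬(playable E).Nonempty) : gameVal b E = 0 := by
  rw [gameVal, dif_neg h]

theorem gameVal_true_le (hv : v ∈ playable E) :
    gameVal true E ≤ 1 + gameVal false (residual E v) := by
  rw [gameVal, dif_pos ⟨v, hv⟩, if_pos rfl]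
  exact Nat.add_le_add_left (inf'_le _ (mem_attach _ ⟨v, hv⟩)) 1

theorem exists_gameVal_false_eq (h : (playable E).Nonempty) :
    ∃ v ∈ playable E, gameVal false E = 1 + gameVal true (residual E v) := by
  rw [gameVal, dif_pos h, if_neg Bool.false_ne_true]
  obtain ⟨⟨v, hv⟩, -, hmax⟩ := exists_mem_eq_sup' (attach_nonempty_iff.mpr h)
    (fun v ↦ gameVal (!false) (residual E v.1))
  exact ⟨v, hv, congrArg (1 + ·) hmax⟩

theorem exists_gameVal_le (b : Bool) (h : (playable E).Nonempty) :
    ∃ v ∈ playable E, gameVal b E ≤ 1 + gameVal (!b) (residual E v) := by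
  cases b with
  | true => exact h.imp fun v hv ↦ ⟨hv, gameVal_true_le hv⟩
  | false => exact (exists_gameVal_false_eq h).imp fun v hv ↦ ⟨hv.1, hv.2.le⟩

theorem gameVal_le_card (b : Bool) (E : Finset (Finset V)) : gameVal b E ≤ #E := by
  induction E using Finset.strongInduction generalizing b with
  | H E ih =>
    by_cases hp : (playable E).Nonempty
    · obtain ⟨v, hv, hle⟩ := exists_gameVal_le b hp
      have hdegree := mem_playable_iff_degree_pos.1 hv
      have hrest := ih (residual E v) (residual_ssubset hdegree) (!b)
      have hcard := card_residual_add_degree E v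
      omega
    · exact (gameVal_eq_zero b hp).trans_le (Nat.zero_le _)

theorem six_mul_gameVal_true_le_potential (E : Finset (Finset V)) (h3 : ∀ e ∈ E, #e ≤ 3) :
    6 * (gameVal true E : ℤ) ≤ potential E := by
  induction E using Finset.strongInduction with
  | H E ih =>
    obtain hempty | hne := (sharedVertices E).eq_empty_or_nonempty
    · have hcard := gameVal_le_card true E
      rw [potential, hempty, card_empty]
      omega
    · obtain ⟨v, hv, hdrop⟩ := exists_potential_residual_add_le h3 hne
      have hdegree : 0 < degree E v := zero_lt_two.trans_le (mem_sharedVertices.1 hv)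
      have hhitter := gameVal_true_le (mem_playable_iff_degree_pos.2 hdegree)
      have hssubset := residual_ssubset hdegree
      set E₁ := residual E v
      have h3' : ∀ e ∈ E₁, #e ≤ 3 := fun e he ↦ h3 e (hssubset.1 he)
      by_cases hp : (playable E₁).Nonempty
      · obtain ⟨w, hw, hstaller⟩ := exists_gameVal_false_eq hp
        have hrest := ih (residual E₁ w) (residual_subset.trans_ssubset hssubset)
          (fun e he ↦ h3' e (residual_subset he))
        have htwoMoves : 6 * (gameVal true E : ℤ) ≤ 12 + potential (residual E₁ w) := by omega
        have hdrop' := potential_residual_add_four_le h3' (mem_playable_iff_degree_pos.1 hw)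
        obtain hdrop_eight | ⟨hdrop_seven, hdvd⟩ := hdrop
        · exact htwoMoves.trans (by linarith)
        · have hround : 6 * (gameVal true E : ℤ) ≤ potential E + 1 := htwoMoves.trans (by linarith)
          omega
      · have hover := gameVal_eq_zero false hp
        have hrest := ih E₁ hssubset h3'
        omega

end Game

end TransversalGame

theorem gameTransversalNum_le_of_three_uniform_two_regular_general
    {V : Type} [Fintype V] [DecidableEq V] (E : Finset (Finset V))
    (h3 : ∀ e ∈ E, e.card ≤ 3) :
    (gameTransversalNum E : ℚ) ≤ E.card - (1 / 6) * (TransversalGame.sharedVertices E).card := by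
  have hbound := TransversalGame.six_mul_gameVal_true_le_potential E h3
  rw [← gameTransversalNum, TransversalGame.potential] at hbound
  have hrat : (6 : ℚ) * gameTransversalNum E
      ≤ 6 * E.card - (TransversalGame.sharedVertices E).card := by exact_mod_cast hbound
  linarith

/-- If `H` is a `3`-uniform `2`-regular hypergraph, then `τ_g(H) ≤ (3/4) m(H)`. -/
theorem gameTransversalNum_le_of_three_uniform_two_regular
    {V : Type} [Fintype V] [DecidableEq V] (E : Finset (Finset V))
    (h3 : ∀ e ∈ E, e.card = 3)
    (hreg : ∀ v : V, (E.filter (fun e => v ∈ e)).card = 2) :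
    (gameTransversalNum E : ℚ) ≤ (3 / 4) * E.card := by
  have hbound := gameTransversalNum_le_of_three_uniform_two_regular_general E
    fun e he ↦ (h3 e he).le
  have hshared : (2 * (TransversalGame.sharedVertices E).card : ℚ) = 3 * E.card :=
    mod_cast TransversalGame.two_mul_card_sharedVertices_of_regular h3 hreg
  linarith
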